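/- Let Z be a standard Gaussian random variable with density ψ(x) = (1/√(2π)) e^{-x²/2}, and let X be a real random variable with density p satisfying p(x) ≤ M for almost every x and E[X²] < +∞. Set Δ = sup_x |p(x) − ψ(x)|. Then, for every T > 0, the relative entropy satisfies D(X‖Z) ≤ 2TΔ + 2√(2π) e^{T²/2} Δ + ∫_{|x| > T} (x²/2 + log(M√(2π))) p(x) dx. -/

import Mathlib

open MeasureTheory
open scoped Real

/-- The extended-real-valued integral `∫ f dμ`, defined as the difference of the
lintegrals of the positive and negative parts of `f`. -/
noncomputable def eInt {α : Type*} [MeasurableSpace α] (μ : Measure α) (f : α → ℝ) : EReal :=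
  ((∫⁻ x, ENNReal.ofReal (f x) ∂μ) : EReal) - ((∫⁻ x, ENNReal.ofReal (-(f x)) ∂μ) : EReal)

/-- Relative entropy `D(p‖ψ) = ∫ p log(p/ψ)` of probability densities on `ℝ`. -/
noncomputable def relEntD (p ψ : ℝ → ℝ) : EReal :=
  eInt volume (fun x => p x * Real.log (p x / ψ x))

/-- The standard Gaussian density `ψ(x) = (2π)^{-1/2} e^{-x²/2}`. -/
noncomputable def stdGaussPDF (x : ℝ) : ℝ :=
  (1 / Real.sqrt (2 * π)) * Real.exp (-x ^ 2 / 2)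

theorem aux_psi_eq : stdGaussPDF = ProbabilityTheory.gaussianPDFReal 0 1 := by
  funext x
  simp [stdGaussPDF, ProbabilityTheory.gaussianPDFReal]

theorem aux_psi_pos (x : ℝ) : 0 < stdGaussPDF x := by
  unfold stdGaussPDF; positivity

theorem aux_eInt (f : ℝ → ℝ) (hf : Integrable f volume) :
    eInt volume f = ((∫ x, f x : ℝ) : EReal) := by
  have h1 : ∫⁻ x, ENNReal.ofReal (f x) ≠ ⊤ := hf.lintegral_lt_top.ne
  have h2 : ∫⁻ x, ENNReal.ofReal (-(f x)) ≠ ⊤ := hf.neg.lintegral_lt_top.ne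
  rw [integral_eq_lintegral_pos_part_sub_lintegral_neg_part hf, EReal.coe_sub,
    EReal.coe_ennreal_toReal h1, EReal.coe_ennreal_toReal h2]
  rfl

theorem aux_lower (p q : ℝ) (hp : 0 ≤ p) (hq : 0 < q) : p - q ≤ p * Real.log (p / q) := by
  rcases hp.eq_or_lt with h | h
  · subst h; simp; exact hq.le
  · have h1 := Real.one_sub_inv_le_log_of_pos (div_pos h hq)
    have h2 := mul_le_mul_of_nonneg_left h1 hp
    have h3 : p * (1 - (p / q)⁻¹) = p - q := by field_simp
    linarith

theorem aux_upper (p q : ℝ) (hp : 0 ≤ p) (hq : 0 < q) :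
    p * Real.log (p / q) ≤ (p - q) + (p - q) ^ 2 / q := by
  rcases hp.eq_or_lt with h | h
  · subst h
    have : (0 - q) ^ 2 / q = q := by field_simp; ring
    rw [this]; simp
  · have h1 := Real.log_le_sub_one_of_pos (div_pos h hq)
    have h2 := mul_le_mul_of_nonneg_left h1 hp
    have h3 : p * (p / q - 1) = (p - q) + (p - q) ^ 2 / q := by field_simp; ring
    linarith

theorem aux_tail (p M x : ℝ) (hp : 0 ≤ p) (hM : p ≤ M) :
    p * Real.log (p / stdGaussPDF x) ≤
      (x ^ 2 / 2 + Real.log (M * Real.sqrt (2 * π))) * p := by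
  rcases hp.eq_or_lt with h | h
  · subst h; simp
  · have e : p / stdGaussPDF x = (p * Real.sqrt (2 * π)) * Real.exp (x ^ 2 / 2) := by
      unfold stdGaussPDF
      rw [neg_div, Real.exp_neg]
      field_simp
    have hs : 0 < Real.sqrt (2 * π) := by positivity
    rw [e, Real.log_mul (by positivity) (by positivity), Real.log_exp]
    have : Real.log (p * Real.sqrt (2 * π)) ≤ Real.log (M * Real.sqrt (2 * π)) :=
      Real.log_le_log (by positivity) (by gcongr)
    nlinarith

theorem aux_mid (p Δ T x : ℝ) (hp : 0 ≤ p) (hΔ : |p - stdGaussPDF x| ≤ Δ) (hx : |x| ≤ T) :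
    p * Real.log (p / stdGaussPDF x) ≤
      Δ + Real.sqrt (2 * π) * Real.exp (T ^ 2 / 2) * Δ * (p + stdGaussPDF x) := by
  have hq := aux_psi_pos x
  have h1 := aux_upper p _ hp hq
  have h2 : p - stdGaussPDF x ≤ Δ := (le_abs_self _).trans hΔ
  have h0 : 0 ≤ Δ := (abs_nonneg _).trans hΔ
  have h3 : |p - stdGaussPDF x| ≤ p + stdGaussPDF x := by
    rw [abs_le]; constructor <;> linarith
  have h4 : (stdGaussPDF x)⁻¹ ≤ Real.sqrt (2 * π) * Real.exp (T ^ 2 / 2) := by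
    have : (stdGaussPDF x)⁻¹ = Real.sqrt (2 * π) * Real.exp (x ^ 2 / 2) := by
      unfold stdGaussPDF
      rw [neg_div, Real.exp_neg]
      field_simp
    rw [this]
    have : x ^ 2 ≤ T ^ 2 := sq_le_sq' (abs_le.1 hx).1 (abs_le.1 hx).2
    gcongr
  have h5 : (p - stdGaussPDF x) ^ 2 / stdGaussPDF x ≤
      (Δ * (p + stdGaussPDF x)) * (Real.sqrt (2 * π) * Real.exp (T ^ 2 / 2)) := by
    rw [div_eq_mul_inv]
    refine mul_le_mul ?_ h4 (by positivity) (by positivity)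
    rw [← sq_abs, sq]
    exact mul_le_mul hΔ h3 (abs_nonneg _) h0
  nlinarith

/-- **Inequality (6.5).** Let `Z` be standard Gaussian with density `ψ`, and let `X`
have a density `p ≤ M` a.e. with `E X² < ∞`. With `Δ = sup_x |p(x) − ψ(x)|`, for every
`T > 0`:
`D(X‖Z) ≤ 2TΔ + 2√(2π) e^{T²/2} Δ + ∫_{|x|>T} (x²/2 + log(M√(2π))) p(x) dx`. -/
theorem stmt_17
    (p : ℝ → ℝ) (hpm : Measurable p) (hpnn : ∀ x, 0 ≤ p x)
    (hp1 : ∫⁻ x, ENNReal.ofReal (p x) = 1)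
    (M : ℝ) (hM : ∀ᵐ x ∂(volume : Measure ℝ), p x ≤ M)
    (hsec : Integrable (fun x => x ^ 2 * p x) volume)
    (Δ : ℝ) (hΔ : ∀ᵐ x ∂(volume : Measure ℝ), |p x - stdGaussPDF x| ≤ Δ)
    (T : ℝ) (hT : 0 < T) :
    relEntD p stdGaussPDF ≤
      ((2 * T * Δ + 2 * Real.sqrt (2 * π) * Real.exp (T ^ 2 / 2) * Δ
        + ∫ x in {x : ℝ | T < |x|},
            (x ^ 2 / 2 + Real.log (M * Real.sqrt (2 * π))) * p x : ℝ) : EReal) := by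
  have hpi : Integrable p volume := by
    refine ⟨hpm.aestronglyMeasurable, ?_⟩
    rw [hasFiniteIntegral_iff_ofReal (Filter.Eventually.of_forall hpnn), hp1]
    exact ENNReal.one_lt_top
  have hpI : ∫ x, p x = 1 := by
    rw [integral_eq_lintegral_of_nonneg_ae (Filter.Eventually.of_forall hpnn)
      hpm.aestronglyMeasurable, hp1]; rfl
  have hqi : Integrable stdGaussPDF volume := by
    rw [aux_psi_eq]; exact ProbabilityTheory.integrable_gaussianPDFReal 0 1
  have hqI : ∫ x, stdGaussPDF x = 1 := by
    rw [aux_psi_eq]; exact ProbabilityTheory.integral_gaussianPDFReal_eq_one 0 one_ne_zero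
  have hqm : Measurable stdGaussPDF := by
    rw [aux_psi_eq]; exact ProbabilityTheory.measurable_gaussianPDFReal 0 1
  have hΔ0 : 0 ≤ Δ := by
    obtain ⟨x, hx⟩ := hΔ.exists
    exact (abs_nonneg _).trans hx
  set h : ℝ → ℝ := fun x => (x ^ 2 / 2 + Real.log (M * Real.sqrt (2 * π))) * p x with hh
  have hhi : Integrable h volume := by
    have := (hsec.div_const 2).add (hpi.const_mul (Real.log (M * Real.sqrt (2 * π))))
    refine this.congr (Filter.Eventually.of_forall fun x => ?_)
    simp only [hh, Pi.add_apply]; ring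
  set f : ℝ → ℝ := fun x => p x * Real.log (p x / stdGaussPDF x) with hf
  have hfm : Measurable f := hpm.mul (Real.measurable_log.comp (hpm.div hqm))
  have hfi : Integrable f volume := by
    refine ((hpi.sub hqi).abs.add hhi.abs).mono' hfm.aestronglyMeasurable ?_
    filter_upwards [hM] with x hx
    have a := aux_lower (p x) _ (hpnn x) (aux_psi_pos x)
    have b := aux_tail (p x) M x (hpnn x) hx
    change |f x| ≤ |p x - stdGaussPDF x| + |h x|
    change _ ≤ f x at a
    change f x ≤ h x at b
    rw [abs_le]
    constructor
    · linarith [neg_abs_le (p x - stdGaussPDF x), abs_nonneg (h x)]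
    · linarith [le_abs_self (h x), abs_nonneg (p x - stdGaussPDF x)]
  have e : relEntD p stdGaussPDF = ((∫ x, f x : ℝ) : EReal) := aux_eInt f hfi
  rw [e, EReal.coe_le_coe_iff]
  have hS : MeasurableSet {x : ℝ | T < |x|} := measurableSet_lt measurable_const measurable_abs
  rw [← integral_add_compl hS hfi, add_comm]
  have hc : {x : ℝ | T < |x|}ᶜ = Set.Icc (-T) T := by
    ext x; simp [abs_le]
  refine add_le_add ?_ ?_
  · rw [hc]
    set C := Real.sqrt (2 * π) * Real.exp (T ^ 2 / 2) * Δ with hC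
    have hC0 : 0 ≤ C := by positivity
    have hsi : Integrable (fun x => p x + stdGaussPDF x) volume := hpi.add hqi
    have i1 : IntegrableOn (fun _ : ℝ => Δ) (Set.Icc (-T) T) volume := by simp
    have i2 : IntegrableOn (fun x : ℝ => C * (p x + stdGaussPDF x)) (Set.Icc (-T) T) volume :=
      (hsi.const_mul C).integrableOn
    calc ∫ x in Set.Icc (-T) T, f x
        ≤ ∫ x in Set.Icc (-T) T, (Δ + C * (p x + stdGaussPDF x)) := by
          refine setIntegral_mono_on_ae hfi.integrableOn (i1.add i2) measurableSet_Icc ?_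
          filter_upwards [hΔ] with x hx hxT
          exact aux_mid (p x) Δ T x (hpnn x) hx (abs_le.2 hxT)
      _ = 2 * T * Δ + C * ∫ x in Set.Icc (-T) T, (p x + stdGaussPDF x) := by
          rw [integral_add i1 i2, integral_const_mul, setIntegral_const]
          congr 1
          rw [Real.volume_real_Icc_of_le (by linarith), smul_eq_mul]; ring
      _ ≤ 2 * T * Δ + C * 2 := by
          gcongr
          refine (setIntegral_le_integral hsi (Filter.Eventually.of_forall fun x =>
            add_nonneg (hpnn x) (aux_psi_pos x).le)).trans ?_
          rw [integral_add hpi hqi, hpI, hqI]; norm_num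
      _ = _ := by rw [hC]; ring
  · refine setIntegral_mono_ae hfi.integrableOn hhi.integrableOn ?_
    filter_upwards [hM] with x hx
    exact aux_tail (p x) M x (hpnn x) hx
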